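/- arXiv:2605.06062 — 2 statements merged into one kernel-verified Lean document; each statement's English description precedes it below -/
import Mathlib

section
/- Consider the full persistent-surveillance system and the per-part subsystems. Let S be the maximal invariant subset of D for the full system and S_i the maximal invariant subset of D_i for the i-th per-part subsystem. Then for every (x, z, u) ∈ S and every index i : Fin N, one has (x, z i, u) ∈ S_i; i.e. S ⊆ Ŝ where Ŝ := {(x, z, u) ∈ D | ∀ i, (x, z i, u) ∈ S_i}. Consequently the compositional monitor is complete: any state flagged by some per-part invariant check is also outside the full-system invariant. -/
/-- A set `A` is (robust positively) invariant for the set-valued successor map `F`. -/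
def Invariant {α : Type*} (F : α → Set α) (A : Set α) : Prop :=
  ∀ s ∈ A, F s ⊆ A

/-- The maximal invariant subset of `D`: the union of all invariant subsets of `D`. -/
def maxInv {α : Type*} (F : α → Set α) (D : Set α) : Set α :=
  ⋃₀ {A : Set α | A ⊆ D ∧ Invariant F A}

/-- Region-dependent LPV factor set: decay interval when `x` is in the observation
region of part `i`, growth interval otherwise. -/
noncomputable def Gamma {N : ℕ} (Obs : Fin N → Set (ℝ × ℝ))
    (aMin aMax bMin bMax : Fin N → ℝ) (i : Fin N) (x : ℝ × ℝ) : Set ℝ :=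
  open Classical in
  if x ∈ Obs i then Set.Icc (aMin i) (aMax i) else Set.Icc (bMin i) (bMax i)

/-- Successor map of the full persistent-surveillance system on state–input vectors
`(x, z, u) ∈ ℝ² × (Fin N → ℝ) × ℝ²`. -/
def Ffull {N : ℕ} (Ts : ℝ) (U : Set (ℝ × ℝ)) (Obs : Fin N → Set (ℝ × ℝ))
    (aMin aMax bMin bMax : Fin N → ℝ)
    (s : (ℝ × ℝ) × (Fin N → ℝ) × (ℝ × ℝ)) :
    Set ((ℝ × ℝ) × (Fin N → ℝ) × (ℝ × ℝ)) :=
  {p | ∃ z' : Fin N → ℝ, ∃ u' ∈ U, ∃ γ : Fin N → ℝ,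
    (∀ i, γ i ∈ Gamma Obs aMin aMax bMin bMax i s.1) ∧
    (∀ i, z' i = γ i * s.2.1 i) ∧
    p = (s.1 + Ts • s.2.2, z', u')}

/-- Successor map of the `i`-th per-part subsystem on `(x, zᵢ, u) ∈ ℝ² × ℝ × ℝ²`. -/
def Fsub {N : ℕ} (Ts : ℝ) (U : Set (ℝ × ℝ)) (Obs : Fin N → Set (ℝ × ℝ))
    (aMin aMax bMin bMax : Fin N → ℝ) (i : Fin N)
    (s : (ℝ × ℝ) × ℝ × (ℝ × ℝ)) : Set ((ℝ × ℝ) × ℝ × (ℝ × ℝ)) :=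
  {p | ∃ u' ∈ U, ∃ γ ∈ Gamma Obs aMin aMax bMin bMax i s.1,
    p = (s.1 + Ts • s.2.2, γ * s.2.1, u')}

/-- Constraint set of the full system. -/
def Dfull {N : ℕ} (X U : Set (ℝ × ℝ)) (zcrit : Fin N → ℝ) :
    Set ((ℝ × ℝ) × (Fin N → ℝ) × (ℝ × ℝ)) :=
  {s | s.1 ∈ X ∧ (∀ i, s.2.1 i ∈ Set.Icc (0 : ℝ) (zcrit i)) ∧ s.2.2 ∈ U}

/-- Constraint set of a per-part subsystem with critical threshold `zc`. -/
def Dsub (X U : Set (ℝ × ℝ)) (zc : ℝ) : Set ((ℝ × ℝ) × ℝ × (ℝ × ℝ)) :=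
  {s | s.1 ∈ X ∧ s.2.1 ∈ Set.Icc (0 : ℝ) zc ∧ s.2.2 ∈ U}

/-- The projection `(x, z, u) ↦ (x, zᵢ, u)` of a state of the full system to the state of its
`i`-th per-part subsystem. -/
def partProj {ι α β γ : Type*} (i : ι) (s : α × (ι → β) × γ) : α × β × γ :=
  (s.1, s.2.1 i, s.2.2)

section MaximalInvariant

variable {α β : Type*} {F : α → Set α} {G : β → Set β} {π : α → β} {A D : Set α} {E : Set β}

theorem maxInv_subset : maxInv F D ⊆ D :=
  Set.sUnion_subset fun _ hA => hA.1

theorem Invariant.image (hA : Invariant F A) (hlift : ∀ s ∈ A, G (π s) ⊆ π '' F s) :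
    Invariant G (π '' A) := by
  rintro _ ⟨s, hs, rfl⟩
  exact (hlift s hs).trans (Set.image_mono (hA s hs))

theorem mapsTo_maxInv (hπ : Set.MapsTo π D E) (hlift : ∀ s ∈ D, G (π s) ⊆ π '' F s) :
    Set.MapsTo π (maxInv F D) (maxInv G E) := by
  rintro s ⟨A, ⟨hAD, hA⟩, hs⟩
  have hAE : π '' A ⊆ E := (hπ.mono_left hAD).image_subset
  have hA_image : Invariant G (π '' A) := hA.image fun t ht => hlift t (hAD ht)
  exact ⟨π '' A, ⟨hAE, hA_image⟩, Set.mem_image_of_mem π hs⟩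

end MaximalInvariant

section Surveillance

variable {N : ℕ} {Ts : ℝ} {X U : Set (ℝ × ℝ)} {Obs : Fin N → Set (ℝ × ℝ)}
  {zcrit aMin aMax bMin bMax : Fin N → ℝ}

theorem Gamma_nonempty {i : Fin N} (ha : aMin i ≤ aMax i) (hb : bMin i ≤ bMax i) (x : ℝ × ℝ) :
    (Gamma Obs aMin aMax bMin bMax i x).Nonempty := by
  unfold Gamma
  split_ifs
  · exact Set.nonempty_Icc.2 ha
  · exact Set.nonempty_Icc.2 hb

theorem mapsTo_partProj_Dfull (i : Fin N) :
    Set.MapsTo (partProj i) (Dfull X U zcrit) (Dsub X U (zcrit i)) :=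
  fun _ ⟨hx, hz, hu⟩ => ⟨hx, hz i, hu⟩

theorem Fsub_partProj_subset_image_Ffull {s : (ℝ × ℝ) × (Fin N → ℝ) × (ℝ × ℝ)}
    (hΓ : ∀ j, (Gamma Obs aMin aMax bMin bMax j s.1).Nonempty) (i : Fin N) :
    Fsub Ts U Obs aMin aMax bMin bMax i (partProj i s) ⊆
      partProj i '' Ffull Ts U Obs aMin aMax bMin bMax s := by
  rintro _ ⟨u', hu', g, hg, rfl⟩
  -- The factors of distinct parts are chosen independently, so `g` extends to a full family.
  obtain ⟨γ, hγ, rfl⟩ : g ∈ Function.eval i ''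
      Set.univ.pi fun j => Gamma Obs aMin aMax bMin bMax j s.1 :=
    Set.subset_eval_image_pi (Set.univ_pi_nonempty_iff.2 hΓ) i hg
  exact ⟨(s.1 + Ts • s.2.2, γ * s.2.1, u'),
    ⟨_, u', hu', γ, fun j => hγ j (Set.mem_univ j), fun _ => rfl, rfl⟩, rfl⟩

end Surveillance

/-- Completeness of the compositional monitor: every element of the full-system maximal
robust positively invariant set `S` lies, for each part `i`, in the `i`-th per-part
maximal invariant set; i.e. `S ⊆ Ŝ`. -/
theorem full_rpi_subset_compositional_rpi (N : ℕ) (Ts : ℝ) (hTs : 0 < Ts)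
    (X U : Set (ℝ × ℝ)) (Obs : Fin N → Set (ℝ × ℝ))
    (zcrit aMin aMax bMin bMax : Fin N → ℝ)
    (hzcrit : ∀ i, 0 < zcrit i)
    (haMin : ∀ i, 0 < aMin i) (haMinMax : ∀ i, aMin i ≤ aMax i)
    (hbMin : ∀ i, 0 < bMin i) (hbMinMax : ∀ i, bMin i ≤ bMax i) :
    maxInv (Ffull Ts U Obs aMin aMax bMin bMax) (Dfull X U zcrit) ⊆
    {s : (ℝ × ℝ) × (Fin N → ℝ) × (ℝ × ℝ) | s ∈ Dfull X U zcrit ∧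
      ∀ i : Fin N, (s.1, s.2.1 i, s.2.2) ∈
        maxInv (Fsub Ts U Obs aMin aMax bMin bMax i) (Dsub X U (zcrit i))} := by
  intro s hs
  refine ⟨maxInv_subset hs, fun i => ?_⟩
  have hlift : ∀ t ∈ Dfull X U zcrit, Fsub Ts U Obs aMin aMax bMin bMax i (partProj i t) ⊆
      partProj i '' Ffull Ts U Obs aMin aMax bMin bMax t := fun t _ =>
    Fsub_partProj_subset_image_Ffull
      (fun j => Gamma_nonempty (haMinMax j) (hbMinMax j) t.1) i
  exact mapsTo_maxInv (mapsTo_partProj_Dfull i) hlift hs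
end

section
/- Consider the i-th per-part subsystem, with the interval (LPV) successor map Fi and the worst-case vertex successor map Fvert_i (x, zi, u) := {(x + Ts • u, c x * zi, u') | u' ∈ U}, where c x := aMax i if x ∈ Obs i and c x := bMax i otherwise. Let A be any set with A ⊆ {(x, zi, u) | 0 ≤ zi} that is downward closed in the uncertainty coordinate (if (x, zi, u) ∈ A and 0 ≤ zi' ≤ zi then (x, zi', u) ∈ A). Then A is invariant for Fi if and only if A is invariant for Fvert_i. -/
/-- Region-dependent LPV factor set for one part: decay interval when `x` is in the
observation region, growth interval otherwise. -/
noncomputable def GammaPart (Obsi : Set (ℝ × ℝ)) (aMin aMax bMin bMax : ℝ)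
    (x : ℝ × ℝ) : Set ℝ :=
  open Classical in
  if x ∈ Obsi then Set.Icc aMin aMax else Set.Icc bMin bMax

/-- Interval (LPV) successor map of the per-part subsystem on `(x, zᵢ, u) ∈ ℝ² × ℝ × ℝ²`. -/
def Fpart (Ts : ℝ) (U : Set (ℝ × ℝ)) (Obsi : Set (ℝ × ℝ)) (aMin aMax bMin bMax : ℝ)
    (s : (ℝ × ℝ) × ℝ × (ℝ × ℝ)) : Set ((ℝ × ℝ) × ℝ × (ℝ × ℝ)) :=
  {p | ∃ u' ∈ U, ∃ γ ∈ GammaPart Obsi aMin aMax bMin bMax s.1,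
    p = (s.1 + Ts • s.2.2, γ * s.2.1, u')}

/-- Worst-case vertex factor: `aMax` when observed, `bMax` otherwise. -/
noncomputable def cVert (Obsi : Set (ℝ × ℝ)) (aMax bMax : ℝ) (x : ℝ × ℝ) : ℝ :=
  open Classical in
  if x ∈ Obsi then aMax else bMax

/-- Worst-case vertex successor map of the per-part subsystem. -/
noncomputable def Fvert (Ts : ℝ) (U : Set (ℝ × ℝ)) (Obsi : Set (ℝ × ℝ)) (aMax bMax : ℝ)
    (s : (ℝ × ℝ) × ℝ × (ℝ × ℝ)) : Set ((ℝ × ℝ) × ℝ × (ℝ × ℝ)) :=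
  {p | ∃ u' ∈ U, p = (s.1 + Ts • s.2.2, cVert Obsi aMax bMax s.1 * s.2.1, u')}

/-- Per-part constraint set with critical threshold `zc`. -/
def Dpart (X U : Set (ℝ × ℝ)) (zc : ℝ) : Set ((ℝ × ℝ) × ℝ × (ℝ × ℝ)) :=
  {s | s.1 ∈ X ∧ s.2.1 ∈ Set.Icc (0 : ℝ) zc ∧ s.2.2 ∈ U}

section ScaledSucc

variable {X R V : Type*}

/-- Successor map of a state `(x, z, u)` with deterministic motion `x ↦ f x u`, free choice of the
next input in `U`, and an uncertainty `z` scaled by any factor admissible at the current position.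
The interval and the vertex system are both of this form, the latter with singleton factor sets. -/
def scaledSucc [Mul R] (f : X → V → X) (U : Set V) (Γ : X → Set R) (s : X × R × V) :
    Set (X × R × V) :=
  {p | ∃ u' ∈ U, ∃ γ ∈ Γ s.1, p = (f s.1 s.2.2, γ * s.2.1, u')}

/-- Downward closedness in the uncertainty coordinate, where only nonnegative uncertainties are
required to belong to the set. -/
def DownwardClosed [Zero R] [LE R] (A : Set (X × R × V)) : Prop :=
  ∀ (x : X) (z z' : R) (u : V), (x, z, u) ∈ A → 0 ≤ z' → z' ≤ z → (x, z', u) ∈ A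

variable [MulZeroClass R] [Preorder R] [PosMulMono R] [MulPosMono R]
  {f : X → V → X} {U : Set V} {Γ Γ' : X → Set R} {A : Set (X × R × V)}

theorem Invariant.scaledSucc_of_isCofinalFor (hinv : Invariant (scaledSucc f U Γ') A)
    (hA : DownwardClosed A) (hpos : ∀ s ∈ A, 0 ≤ s.2.1) (hΓ : ∀ x, ∀ γ ∈ Γ x, 0 ≤ γ)
    (hcof : ∀ x, IsCofinalFor (Γ x) (Γ' x)) :
    Invariant (scaledSucc f U Γ) A := by
  rintro ⟨x, z, u⟩ hs _ ⟨u', hu', γ, hγ, rfl⟩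
  obtain ⟨γ', hγ', hle⟩ := hcof x hγ
  have hz : 0 ≤ z := hpos _ hs
  have hsucc : (f x u, γ' * z, u') ∈ A := hinv _ hs ⟨u', hu', γ', hγ', rfl⟩
  exact hA _ _ _ _ hsucc (mul_nonneg (hΓ x γ hγ) hz) (mul_le_mul_of_nonneg_right hle hz)

theorem invariant_interval_iff_invariant_vertex_general {c : X → R}
    (hA : DownwardClosed A) (hpos : ∀ s ∈ A, 0 ≤ s.2.1) (hΓ : ∀ x, ∀ γ ∈ Γ x, 0 ≤ γ)
    (hc : ∀ x, IsGreatest (Γ x) (c x)) :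
    Invariant (scaledSucc f U Γ) A ↔ Invariant (scaledSucc f U fun x ↦ {c x}) A := by
  constructor <;> intro hinv
  · refine hinv.scaledSucc_of_isCofinalFor hA hpos ?_ fun x ↦ ?_
    · rintro x _ rfl
      exact hΓ x _ (hc x).1
    · exact .of_subset (Set.singleton_subset_iff.2 (hc x).1)
  · exact hinv.scaledSucc_of_isCofinalFor hA hpos hΓ fun x γ hγ ↦ ⟨c x, rfl, (hc x).2 hγ⟩

end ScaledSucc

section PerPartSubsystem

variable {Ts : ℝ} {U Obsi : Set (ℝ × ℝ)} {aMin aMax bMin bMax : ℝ}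

theorem Fpart_eq_scaledSucc :
    Fpart Ts U Obsi aMin aMax bMin bMax =
      scaledSucc (fun x u ↦ x + Ts • u) U (GammaPart Obsi aMin aMax bMin bMax) :=
  rfl

theorem Fvert_eq_scaledSucc :
    Fvert Ts U Obsi aMax bMax =
      scaledSucc (fun x u ↦ x + Ts • u) U fun x ↦ {cVert Obsi aMax bMax x} := by
  ext s p
  simp [Fvert, scaledSucc]

theorem isGreatest_GammaPart_cVert (ha : aMin ≤ aMax) (hb : bMin ≤ bMax) (x : ℝ × ℝ) :
    IsGreatest (GammaPart Obsi aMin aMax bMin bMax x) (cVert Obsi aMax bMax x) := by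
  unfold GammaPart cVert
  split_ifs
  · exact isGreatest_Icc ha
  · exact isGreatest_Icc hb

theorem le_of_mem_GammaPart {m γ : ℝ} {x : ℝ × ℝ} (ha : m ≤ aMin) (hb : m ≤ bMin)
    (hγ : γ ∈ GammaPart Obsi aMin aMax bMin bMax x) : m ≤ γ := by
  unfold GammaPart at hγ
  split_ifs at hγ
  · exact ha.trans hγ.1
  · exact hb.trans hγ.1

end PerPartSubsystem

/-- For a set `A` of states with nonnegative uncertainty coordinate that is downward
closed in the uncertainty coordinate, invariance for the interval (LPV) successor map
`Fpart` is equivalent to invariance for the worst-case vertex successor map `Fvert`. -/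
theorem invariant_interval_iff_invariant_vertex (Ts : ℝ) (hTs : 0 < Ts)
    (X U Obsi : Set (ℝ × ℝ)) (aMin aMax bMin bMax : ℝ)
    (haMin : 0 < aMin) (haMinMax : aMin ≤ aMax)
    (hbMin : 0 < bMin) (hbMinMax : bMin ≤ bMax)
    (A : Set ((ℝ × ℝ) × ℝ × (ℝ × ℝ)))
    (hpos : A ⊆ {p : (ℝ × ℝ) × ℝ × (ℝ × ℝ) | 0 ≤ p.2.1})
    (hdown : ∀ (x : ℝ × ℝ) (zi zi' : ℝ) (u : ℝ × ℝ),
      (x, zi, u) ∈ A → 0 ≤ zi' → zi' ≤ zi → (x, zi', u) ∈ A) :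
    Invariant (Fpart Ts U Obsi aMin aMax bMin bMax) A ↔
      Invariant (Fvert Ts U Obsi aMax bMax) A := by
  rw [Fpart_eq_scaledSucc, Fvert_eq_scaledSucc]
  exact invariant_interval_iff_invariant_vertex_general hdown hpos
    (fun _ _ ↦ le_of_mem_GammaPart haMin.le hbMin.le)
    (isGreatest_GammaPart_cVert haMinMax hbMinMax)
end
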